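/- arXiv:2412.19889 — 5 statements merged into one kernel-verified Lean document; each statement's English description precedes it below -/
import Mathlib

section
/- Let n ≥ 1, let R > 0 (possibly R = ∞ handled by taking R any positive real; here assume R : ℝ, R > 0), let c : ℕ → ℝ and g : ℝ → ℝ be such that for every t with |t| < R the series ∑_k c k · t^k converges to g t (HasSum (fun k ↦ c k * t^k) (g t)). Let a x : Fin n → ℝ satisfy |a j| · |x i| < R for all i, j. Then the family indexed by strictly decreasing tuples k : Fin n → ℕ, with term (∏_{l} c (k l)) · D(a, k) · D(x, k), has sum equal to det of the n×n matrix with (i,j) entry g (a j * x i). (This is the determinant form of Theorem 1: det M_G(X) = Σ_λ (G_λ/C_λ) s_λ(a) s_λ(x) · V(a) V(x), using the bialternant formula, since c k = g^{(k)}(0)/k!.) -/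
/-- A finite product of convergent real series is the sum over all tuples of indices. -/
theorem hasSum_prod_fin {n : ℕ} {f : Fin n → ℕ → ℝ} {s : Fin n → ℝ}
    (h : ∀ i, HasSum (f i) (s i)) :
    HasSum (fun k : Fin n → ℕ => ∏ i, f i (k i)) (∏ i, s i) := by
  induction n with
  | zero => simp
  | succ n ih =>
    have ht := ih fun i => h i.succ
    have hsum := summable_mul_of_summable_norm (h 0).summable.norm ht.summable.norm
    rw [← (Fin.consEquiv fun _ => ℕ).hasSum_iff, Fin.prod_univ_succ]
    refine ((h 0).mul ht hsum).congr_fun fun p => ?_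
    simp [Fin.prod_univ_succ]

/-- Rearranging a strictly decreasing tuple determines both the tuple and the permutation. -/
theorem injective_strictAnti_comp_perm (n : ℕ) :
    Function.Injective
      fun p : {k : Fin n → ℕ // StrictAnti k} × Equiv.Perm (Fin n) => p.1.1 ∘ p.2 := by
  rintro ⟨⟨k, hk⟩, σ⟩ ⟨⟨l, hl⟩, τ⟩ h
  dsimp only at h
  have hkl : k = l := by
    rw [← hk.range_inj hl, ← σ.surjective.range_comp k, h, τ.surjective.range_comp]
  subst hkl
  have hστ : σ = τ := Equiv.ext fun i => hk.injective (congrFun h i)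
  rw [hστ]

/-- Every injective tuple is a rearrangement of a strictly decreasing one. -/
theorem exists_strictAnti_comp_perm {n : ℕ} {k : Fin n → ℕ} (hk : Function.Injective k) :
    ∃ (l : Fin n → ℕ) (σ : Equiv.Perm (Fin n)), StrictAnti l ∧ l ∘ σ = k := by
  have hmono : StrictMono (k ∘ Tuple.sort k) :=
    (Tuple.monotone_sort k).strictMono_of_injective (hk.comp (Tuple.sort k).injective)
  refine ⟨(k ∘ Tuple.sort k) ∘ Fin.rev, (Tuple.sort k).symm.trans Fin.revPerm,
    hmono.comp_strictAnti Fin.rev_strictAnti, ?_⟩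
  ext i
  simp

/-- A sum over all tuples of a family supported on injective tuples, reorganised as a sum over
strictly decreasing tuples of sums over their rearrangements. -/
theorem HasSum.sum_perm_strictAnti {n : ℕ} {F : (Fin n → ℕ) → ℝ} {s : ℝ} (h : HasSum F s)
    (hF : ∀ k, ¬ Function.Injective k → F k = 0) :
    HasSum (fun k : {k : Fin n → ℕ // StrictAnti k} =>
      ∑ σ : Equiv.Perm (Fin n), F (k.1 ∘ σ)) s := by
  have hcomp := ((injective_strictAnti_comp_perm n).hasSum_iff (f := F) (a := s) ?_).2 h
  · exact hcomp.prod_fiberwise fun k => hasSum_fintype _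
  · intro k hk
    refine hF k fun hinj => hk ?_
    obtain ⟨l, σ, hl, hlσ⟩ := exists_strictAnti_comp_perm hinj
    exact ⟨(⟨l, hl⟩, σ), hlσ⟩

theorem cauchy_type_identity_general
    (n : ℕ) (hn : 1 ≤ n) (R : ℝ) (hR : 0 < R)
    (c : ℕ → ℝ) (g : ℝ → ℝ)
    (hg : ∀ t : ℝ, |t| < R → HasSum (fun k : ℕ => c k * t ^ k) (g t))
    (a x : Fin n → ℝ)
    (hax : ∀ i j : Fin n, |a j| * |x i| < R) :
    HasSum
      (fun k : {k : Fin n → ℕ // StrictAnti k} =>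
        (∏ l : Fin n, c (k.1 l)) *
          (Matrix.of fun i j : Fin n => (a i) ^ (k.1 j)).det *
          (Matrix.of fun i j : Fin n => (x i) ^ (k.1 j)).det)
      (Matrix.of fun i j : Fin n => g (a j * x i)).det := by
  have hall : HasSum
      (fun k : Fin n → ℕ => (∏ l, c (k l)) * (∏ l, a l ^ k l) *
        (Matrix.of fun i j : Fin n => x i ^ k j).det)
      (Matrix.of fun i j : Fin n => g (a j * x i)).det := by
    simp only [Matrix.det_apply', Matrix.of_apply, Finset.mul_sum]
    refine hasSum_sum fun σ _ => ?_
    have hσ := (hasSum_prod_fin fun i => hg (a i * x (σ i))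
      (by rw [abs_mul]; exact hax _ _)).mul_left ((Equiv.Perm.sign σ : ℤ) : ℝ)
    refine hσ.congr_fun fun k => ?_
    simp only [mul_pow, Finset.prod_mul_distrib]
    ring
  refine (hall.sum_perm_strictAnti fun k hk => ?_).congr_fun fun k => ?_
  · obtain ⟨i, j, hij, hne⟩ := Function.not_injective_iff.1 hk
    rw [Matrix.det_zero_of_column_eq hne fun r => by simp [hij], mul_zero]
  · rw [← Matrix.det_transpose (Matrix.of fun i j => a i ^ k.1 j), Matrix.det_apply',
      Finset.mul_sum, Finset.sum_mul]
    refine Finset.sum_congr rfl fun σ _ => ?_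
    have hdet := Matrix.det_permute' σ (Matrix.of fun i j => x i ^ k.1 j)
    have hc : ∏ l, c (k.1 (σ l)) = ∏ l, c (k.1 l) := Equiv.prod_comp σ fun l => c (k.1 l)
    simp only [Matrix.submatrix, Matrix.of_apply, id] at hdet
    simp only [Function.comp_apply, Matrix.transpose_apply, Matrix.of_apply, hc, hdet]
    ring
end

section
/- Let n ≥ 1 and let a x : Fin n → ℝ satisfy a j * x i ≠ 1 for all i, j. Then the determinant of the n×n matrix with (i,j) entry 1/(1 - a j * x i) equals (∏_{i<j} (a j - a i)) · (∏_{i<j} (x j - x i)) · ∏_{i,j} (1 - a i * x j)⁻¹. (Variant of the classical Cauchy determinant identity used in Example 2.) -/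
/-- Clearing the first column of a Cauchy-type matrix by row operations leaves a rescaled
Cauchy-type matrix of size one less. -/
theorem det_one_div_one_sub_mul_succ {K : Type*} [Field K] {n : ℕ} (a x : Fin (n + 1) → K)
    (hax : ∀ i j, 1 - a j * x i ≠ 0) :
    (Matrix.of fun i j => 1 / (1 - a j * x i)).det =
      1 / (1 - a 0 * x 0) *
        ((∏ i : Fin n, (x i.succ - x 0) / (1 - a 0 * x i.succ)) *
          ((∏ j : Fin n, (a j.succ - a 0) / (1 - a j.succ * x 0)) *
            (Matrix.of fun i j : Fin n => 1 / (1 - a j.succ * x i.succ)).det)) := by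
  set c : Fin (n + 1) → K :=
    Fin.cons 0 fun i : Fin n => (1 - a 0 * x 0) / (1 - a 0 * x i.succ) with hc
  rw [Matrix.det_eq_of_forall_row_eq_smul_add_const
    (B := Matrix.of fun i j => 1 / (1 - a j * x i) - c i * (1 / (1 - a j * x 0))) c 0
    (by simp [hc]) (by intro i j; simp [hc]), Matrix.det_succ_column_zero,
    Fin.sum_univ_succ, Finset.sum_eq_zero, add_zero]
  · rw [← Matrix.det_mul_row, ← Matrix.det_mul_column]
    simp only [hc, Fin.val_zero, pow_zero, one_mul, Matrix.of_apply, Fin.cons_zero, zero_mul,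
      sub_zero]
    congr 2
    ext i j
    have h₁ := hax i.succ j.succ
    have h₂ : 1 - x i.succ * a 0 ≠ 0 := mul_comm (a 0) _ ▸ hax i.succ 0
    have h₃ := hax 0 j.succ
    simp only [Matrix.submatrix_apply, Matrix.of_apply, Fin.zero_succAbove, Fin.cons_succ]
    field_simp
    ring
  · intro i _
    have h₁ := hax i.succ 0
    have h₂ := hax 0 0
    have : 1 / (1 - a 0 * x i.succ) - c i.succ * (1 / (1 - a 0 * x 0)) = 0 := by
      simp only [hc, Fin.cons_succ]
      field_simp
      ring
    simp only [Matrix.of_apply, this, mul_zero, zero_mul]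

theorem det_one_div_one_sub_mul {K : Type*} [Field K] {n : ℕ} (a x : Fin n → K)
    (hax : ∀ i j, 1 - a j * x i ≠ 0) :
    (Matrix.of fun i j => 1 / (1 - a j * x i)).det =
      (∏ i, ∏ j ∈ Finset.Ioi i, (a j - a i)) * (∏ i, ∏ j ∈ Finset.Ioi i, (x j - x i)) *
        ∏ i, ∏ j, (1 - a i * x j)⁻¹ := by
  induction n with
  | zero => simp
  | succ n ih =>
    rw [det_one_div_one_sub_mul_succ a x hax,
      ih (fun i => a i.succ) (fun i => x i.succ) fun i j => hax i.succ j.succ]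
    simp only [Fin.prod_univ_succ, Fin.prod_Ioi_zero, Fin.prod_Ioi_succ, div_eq_mul_inv,
      Finset.prod_mul_distrib]
    ring

theorem cauchy_determinant_identity_variant
    (n : ℕ) (hn : 1 ≤ n) (a x : Fin n → ℝ)
    (hax : ∀ i j : Fin n, a j * x i ≠ 1) :
    (Matrix.of fun i j : Fin n => 1 / (1 - a j * x i)).det =
      (∏ i : Fin n, ∏ j ∈ Finset.Ioi i, (a j - a i)) *
        (∏ i : Fin n, ∏ j ∈ Finset.Ioi i, (x j - x i)) *
        ∏ i : Fin n, ∏ j : Fin n, (1 - a i * x j)⁻¹ :=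
  det_one_div_one_sub_mul a x fun i j => sub_ne_zero.mpr (hax i j).symm
end

section
/- Let R be a commutative ring, n ≥ 1, m : ℕ, b : ℕ → R, and a x : Fin n → R. Define the n×n matrix M with (i,j) entry ∑_{k=0}^{m} b k · (a j * x i)^k. Then det M = ∑ over strictly decreasing tuples k : Fin n → ℕ with k 0 ≤ m (equivalently, all values ≤ m) of (∏_{l} b (k l)) · D(a, k) · D(x, k). (Determinant form of the polynomial example: the Cauchy-type sum is finite and truncates at partitions with λ_1 ≤ m − n + 1.) -/
/-- Summing over all tuples a function that vanishes on non-injective tuples amounts to summing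
over all rearrangements of the strictly decreasing tuples. -/
theorem sum_piFinset_eq_sum_strictAnti_sum_perm {κ R : Type*} [LinearOrder κ] [AddCommMonoid R]
    {n : ℕ} (s : Finset κ) (F : (Fin n → κ) → R)
    (hF : ∀ p, ¬ Function.Injective p → F p = 0) [DecidablePred fun k : Fin n → κ => StrictAnti k] :
    ∑ p ∈ Fintype.piFinset (fun _ : Fin n => s), F p =
      ∑ k ∈ Fintype.piFinset (fun _ : Fin n => s) with StrictAnti k,
        ∑ σ : Equiv.Perm (Fin n), F (k ∘ σ) := by
  classical
  rw [← Finset.sum_product', ← Finset.sum_filter_of_ne (p := Function.Injective)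
    (fun p _ hp => by_contra fun h => hp (hF p h))]
  symm
  refine Finset.sum_bij (fun q _ => q.1 ∘ q.2) ?_ ?_ ?_ (fun _ _ => rfl)
  · rintro ⟨k, σ⟩ h
    simp only [Finset.mem_product, Finset.mem_filter, Fintype.mem_piFinset, Finset.mem_univ,
      and_true] at h ⊢
    exact ⟨fun i => h.1 _, h.2.injective.comp σ.injective⟩
  · rintro ⟨k, σ⟩ h ⟨k', σ'⟩ h' heq
    simp only [Finset.mem_product, Finset.mem_filter, Finset.mem_univ, and_true] at h h' heq
    have hk : k = k' := by
      have hr : Set.range k = Set.range k' := by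
        rw [← σ.surjective.range_comp k, heq, σ'.surjective.range_comp]
      have := (StrictMono.range_inj h.2.dual_right h'.2.dual_right).1 (by
        rw [Set.range_comp, Set.range_comp, hr])
      exact funext fun i => OrderDual.toDual.injective (congrFun this i)
    subst hk
    exact Prod.ext rfl (Equiv.ext fun i => h.2.injective (congrFun heq i))
  · intro p hp
    simp only [Finset.mem_filter, Fintype.mem_piFinset] at hp
    let τ : Equiv.Perm (Fin n) := Fin.revPerm.trans (Tuple.sort p)
    refine ⟨(p ∘ τ, τ.symm), ?_, ?_⟩
    · simp only [Finset.mem_product, Finset.mem_filter, Fintype.mem_piFinset, Finset.mem_univ,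
        and_true]
      have hmono : StrictMono (p ∘ Tuple.sort p) :=
        (Tuple.monotone_sort p).strictMono_of_injective (hp.2.comp (Tuple.sort p).injective)
      exact ⟨fun i => hp.1 _, fun i j hij => hmono (Fin.rev_lt_rev.2 hij)⟩
    · funext i
      simp

/-- The Cauchy–Binet formula, with minors indexed by strictly decreasing tuples. -/
theorem Matrix.det_sum_mul_eq_sum_strictAnti {κ R : Type*} [LinearOrder κ] [CommRing R] {n : ℕ}
    (s : Finset κ) (f g : Fin n → κ → R) [DecidablePred fun k : Fin n → κ => StrictAnti k] :
    (Matrix.of fun i j => ∑ k ∈ s, g j k * f i k).det =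
      ∑ k ∈ Fintype.piFinset (fun _ : Fin n => s) with StrictAnti k,
        (Matrix.of fun i j => g i (k j)).det * (Matrix.of fun i j => f i (k j)).det := by
  have expand : (Matrix.of fun i j => ∑ k ∈ s, g j k * f i k).det =
      ∑ p ∈ Fintype.piFinset (fun _ : Fin n => s),
        (∏ j, g j (p j)) * (Matrix.of fun i j => f i (p j)).det := by
    have h := (Matrix.detRowAlternating (n := Fin n) (R := R)).toMultilinearMap.map_sum_finset
      (fun j k => g j k • fun i => f i k) (fun _ => s)
    rw [← Matrix.det_transpose]
    refine Eq.trans (congrArg Matrix.det ?_) (h.trans (Finset.sum_congr rfl fun p _ => ?_))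
    · ext i j
      simp [Matrix.transpose_apply, Finset.sum_apply]
    · rw [MultilinearMap.map_smul_univ, smul_eq_mul, ← Matrix.det_transpose (Matrix.of _)]
      rfl
  rw [expand, sum_piFinset_eq_sum_strictAnti_sum_perm]
  · refine Finset.sum_congr rfl fun k _ => ?_
    rw [← Matrix.det_transpose (Matrix.of fun i j => g i (k j)), Matrix.det_apply',
      Finset.sum_mul]
    refine Finset.sum_congr rfl fun σ _ => ?_
    have hperm := Matrix.det_permute' σ (Matrix.of fun i j => f i (k j))
    have hsub : (Matrix.of fun i j => f i ((k ∘ σ) j)) =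
      (Matrix.of fun i j => f i (k j)).submatrix id σ := rfl
    rw [hsub, hperm]
    simp only [Matrix.transpose_apply, Matrix.of_apply, Function.comp_apply]
    ring
  · intro p hp
    obtain ⟨i, j, hij, hne⟩ : ∃ i j, p i = p j ∧ i ≠ j := by
      simpa [Function.Injective] using hp
    rw [Matrix.det_zero_of_column_eq hne (fun l => by simp [hij]), mul_zero]

theorem polynomial_cauchy_type_identity
    (R : Type*) [CommRing R] (n : ℕ) (hn : 1 ≤ n) (m : ℕ)
    (b : ℕ → R) (a x : Fin n → R) :
    (Matrix.of fun i j : Fin n =>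
        ∑ k ∈ Finset.range (m + 1), b k * (a j * x i) ^ k).det =
      ∑ᶠ (k : Fin n → ℕ) (_ : StrictAnti k ∧ ∀ l : Fin n, k l ≤ m),
        (∏ l : Fin n, b (k l)) *
          (Matrix.of fun i j : Fin n => (a i) ^ (k j)).det *
          (Matrix.of fun i j : Fin n => (x i) ^ (k j)).det := by
  classical
  have hmem (k : Fin n → ℕ) : (StrictAnti k ∧ ∀ l : Fin n, k l ≤ m) ↔
      k ∈ {k ∈ Fintype.piFinset fun _ : Fin n => Finset.range (m + 1) | StrictAnti k} := by
    simp [and_comm]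
  simp only [hmem]
  rw [finsum_mem_finset_eq_sum]
  simp only [mul_pow, ← mul_assoc]
  rw [Matrix.det_sum_mul_eq_sum_strictAnti _ (fun i k => x i ^ k) (fun j k => b k * a j ^ k)]
  refine Finset.sum_congr rfl fun k _ => congrArg (· * _) ?_
  exact Matrix.det_mul_row (fun j => b (k j)) (Matrix.of fun i j => a i ^ k j)
end

section
/- Let R be a commutative ring, n ≥ 1, and let μ : Fin n → ℕ be strictly decreasing (μ i > μ j for i < j). For any a x : Fin n → R, the determinant of the n×n matrix with (i,j) entry ∑_{l : Fin n} (a j * x i)^(μ l) equals D(a, μ) · D(x, μ), i.e. det((a i)^(μ j)) · det((x i)^(μ j)). (Determinant form of identity (4): s_μ'(a) s_μ'(x) · V(a) V(x) = det(P_j(x_i)) for g(x) = x^{μ_1} + ⋯ + x^{μ_n}.) -/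
theorem single_partition_cauchy_type_identity
    (R : Type*) [CommRing R] (n : ℕ) (hn : 1 ≤ n)
    (μ : Fin n → ℕ) (hμ : StrictAnti μ) (a x : Fin n → R) :
    (Matrix.of fun i j : Fin n =>
        ∑ l : Fin n, (a j * x i) ^ (μ l)).det =
      (Matrix.of fun i j : Fin n => (a i) ^ (μ j)).det *
        (Matrix.of fun i j : Fin n => (x i) ^ (μ j)).det := by
  rw [mul_comm, ← Matrix.det_transpose (Matrix.of fun i j : Fin n => (a i) ^ (μ j)),
    ← Matrix.det_mul]
  congr 1
  ext i j
  simp [Matrix.mul_apply, mul_pow, mul_comm]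
end

section
/- Let n ≥ 1 and let a x : Fin n → ℝ satisfy |a j * x i| < 1 for all i, j. Then the family indexed by strictly decreasing tuples k : Fin n → ℕ with every value k l even, with term D(a, k) · D(x, k), has sum equal to (∏_{i<j} (a j - a i)) · (∏_{i<j} (x j - x i)) · (∏_{i<j} (a i + a j)) · (∏_{i<j} (x i + x j)) · ∏_{i,j} (1 - (a i)^2 * (x j)^2)⁻¹. (Determinant form of identity (5), obtained from Theorem 1 with g(x) = 1/(1−x²); only partitions in P_{n,even} contribute.) -/
open Finset Equiv

/-- The Cauchy determinant `det (1 / (1 - a i * x j))`. -/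
theorem det_one_sub_mul_inv {K : Type*} [Field K] {n : ℕ} (a x : Fin n → K)
    (h : ∀ i j, 1 - a i * x j ≠ 0) :
    (Matrix.of fun i j => (1 - a i * x j)⁻¹).det =
      (∏ i, ∏ j ∈ Ioi i, (a j - a i)) * (∏ i, ∏ j ∈ Ioi i, (x j - x i)) *
        ∏ i, ∏ j, (1 - a i * x j)⁻¹ := by
  induction n with
  | zero => simp
  | succ n ih =>
    -- Clear the first column below the pivot; the Schur complement is a scaled Cauchy matrix.
    have key : (Matrix.of fun i j => (1 - a i * x j)⁻¹).det =
        (Matrix.of fun i j : Fin (n + 1) => Fin.cases (motive := fun _ => K) (1 - a 0 * x j)⁻¹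
          (fun i' => (1 - a i'.succ * x j)⁻¹ -
            (1 - a 0 * x 0) / (1 - a i'.succ * x 0) * (1 - a 0 * x j)⁻¹) i).det := by
      refine Matrix.det_eq_of_forall_row_eq_smul_add_const
        (Fin.cases 0 fun i' => (1 - a 0 * x 0) / (1 - a i'.succ * x 0)) 0 rfl ?_
      intro i j
      cases i using Fin.cases <;> simp
    have schur : (Matrix.of fun i j : Fin n => (1 - a i.succ * x j.succ)⁻¹ -
          (1 - a 0 * x 0) / (1 - a i.succ * x 0) * (1 - a 0 * x j.succ)⁻¹) =
        Matrix.of fun i j => ((a i.succ - a 0) * (1 - a i.succ * x 0)⁻¹) *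
          (Matrix.of fun i j : Fin n => ((x j.succ - x 0) * (1 - a 0 * x j.succ)⁻¹) *
            (Matrix.of fun i j : Fin n => (1 - a i.succ * x j.succ)⁻¹) i j) i j := by
      ext i j
      have h₁ := h i.succ j.succ
      have h₂ := h i.succ 0
      have h₃ := h 0 j.succ
      simp only [Matrix.of_apply]
      generalize a i.succ = p at *
      generalize x j.succ = q at *
      generalize a 0 = r at *
      generalize x 0 = s at *
      have h₃' : 1 - q * r ≠ 0 := by rwa [mul_comm]
      field_simp
      ring
    rw [key, Matrix.det_succ_column_zero, Fin.sum_univ_succ, sum_eq_zero, add_zero]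
    · have minor : (Matrix.of fun i j : Fin (n + 1) =>
          Fin.cases (motive := fun _ => K) (1 - a 0 * x j)⁻¹
          (fun i' => (1 - a i'.succ * x j)⁻¹ -
            (1 - a 0 * x 0) / (1 - a i'.succ * x 0) * (1 - a 0 * x j)⁻¹) i).submatrix
            (Fin.succAbove 0) Fin.succ =
          Matrix.of fun i j : Fin n => (1 - a i.succ * x j.succ)⁻¹ -
          (1 - a 0 * x 0) / (1 - a i.succ * x 0) * (1 - a 0 * x j.succ)⁻¹ := by
        ext i j
        simp
      rw [minor, schur, Matrix.det_mul_column, Matrix.det_mul_row,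
        ih (fun i => a i.succ) (fun j => x j.succ) fun i j => h _ _]
      simp only [Fin.prod_univ_succ, Fin.prod_Ioi_zero, Fin.prod_Ioi_succ, prod_mul_distrib,
        Matrix.of_apply, Fin.cases_zero, Fin.val_zero, pow_zero]
      ring
    · intro i _
      have h₀ := h 0 0
      simp [div_mul_eq_mul_div, h₀]

/-- A product of finitely many absolutely convergent series, expanded over tuples of indices. -/
theorem hasSum_pi_prod {ι : Type*} {n : ℕ} (f : Fin n → ι → ℝ)
    (hf : ∀ i, Summable fun m => ‖f i m‖) :
    (Summable fun k : Fin n → ι => ‖∏ i, f i (k i)‖) ∧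
      HasSum (fun k : Fin n → ι => ∏ i, f i (k i)) (∏ i, ∑' m, f i m) := by
  induction n with
  | zero =>
    constructor
    · exact (hasSum_fintype _).summable
    · simp
  | succ n ih =>
    obtain ⟨hs, ht⟩ := ih (fun i => f i.succ) fun i => hf i.succ
    have hs₀ := hf 0
    constructor
    · rw [← (Fin.consEquiv fun _ : Fin (n + 1) => ι).summable_iff]
      refine (hs₀.mul_norm hs).congr ?_
      rintro ⟨m, k⟩
      simp [Fin.prod_univ_succ, Fin.consEquiv]
    · rw [← (Fin.consEquiv fun _ : Fin (n + 1) => ι).hasSum_iff, Fin.prod_univ_succ]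
      have hmul : Summable fun p : ι × (Fin n → ι) => f 0 p.1 * ∏ i, f i.succ (p.2 i) :=
        (hs₀.mul_norm hs).of_norm
      refine (HasSum.mul hs₀.of_norm.hasSum ht hmul).congr_fun ?_
      rintro ⟨m, k⟩
      simp [Fin.prod_univ_succ, Fin.consEquiv]

/-- A rearrangement of a strictly decreasing tuple determines both the tuple and the permutation. -/
theorem strictAnti_comp_perm_injective {ι : Type*} [LinearOrder ι] {n : ℕ} :
    Function.Injective fun p : {k : Fin n → ι // StrictAnti k} × Perm (Fin n) =>
      p.1.1 ∘ p.2 := by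
  rintro ⟨⟨k, hk⟩, σ⟩ ⟨⟨l, hl⟩, τ⟩ h
  have hcomp : k = l ∘ (τ * σ⁻¹ : Perm (Fin n)) := by
    ext i
    simpa using congrFun h (σ⁻¹ i)
  have hkl : k = l := hcomp.trans
    (Tuple.unique_antitone (τ := 1) (hcomp ▸ hk.antitone) hl.antitone)
  subst hkl
  have : σ = τ := Equiv.ext fun i => hk.injective (congrFun h i)
  rw [this]

/-- Every injective tuple is a rearrangement of a strictly decreasing one. -/
theorem exists_strictAnti_comp_perm_s6 {ι : Type*} [LinearOrder ι] {n : ℕ} {f : Fin n → ι}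
    (hf : Function.Injective f) :
    ∃ p : {k : Fin n → ι // StrictAnti k} × Perm (Fin n), p.1.1 ∘ p.2 = f := by
  let σ := Tuple.sort (OrderDual.toDual ∘ f)
  have h : Antitone (f ∘ σ) := Tuple.monotone_sort (OrderDual.toDual ∘ f)
  refine ⟨⟨⟨f ∘ σ, h.strictAnti_of_injective (hf.comp σ.injective)⟩, σ⁻¹⟩, ?_⟩
  ext i
  simp

/-- The Cauchy–Binet formula for absolutely convergent series. -/
theorem hasSum_det_mul_det {ι : Type*} [LinearOrder ι] {n : ℕ} (u v : Fin n → ι → ℝ)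
    (h : ∀ i j, Summable fun m => ‖u i m * v j m‖) :
    HasSum (fun k : {k : Fin n → ι // StrictAnti k} =>
        (Matrix.of fun i j => u i (k.1 j)).det * (Matrix.of fun i j => v i (k.1 j)).det)
      (Matrix.of fun i j => ∑' m, u i m * v j m).det := by
  have expand : HasSum (fun f : Fin n → ι =>
      (Matrix.of fun i j => u i (f j)).det * ∏ j, v j (f j))
      (Matrix.of fun i j => ∑' m, u i m * v j m).det := by
    simp only [Matrix.det_apply', sum_mul, Matrix.of_apply]
    refine hasSum_sum fun σ _ => ?_
    refine ((hasSum_pi_prod (fun i m => u (σ i) m * v i m) fun i => h _ _).2.mul_left _).congr_fun ?_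
    intro f
    rw [prod_mul_distrib, mul_assoc]
  rw [← strictAnti_comp_perm_injective.hasSum_iff] at expand
  · refine (expand.prod_fiberwise fun k => hasSum_fintype _).congr_fun ?_
    rintro ⟨k, hk⟩
    rw [Matrix.det_apply' (Matrix.of fun i j => v i (k j)), mul_sum, ← Equiv.sum_comp (Equiv.inv _)]
    refine sum_congr rfl fun τ _ => ?_
    have hperm : (Matrix.of fun i j => u i (k (τ j))).det = _ :=
      Matrix.det_permute' τ (Matrix.of fun i j => u i (k j))
    have hprod : ∏ i, v (τ⁻¹ i) (k i) = ∏ j, v j (k (τ j)) := by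
      rw [← Equiv.prod_comp τ]
      simp
    simp only [Equiv.inv_apply, Perm.sign_inv, Matrix.of_apply, Function.comp_apply, hperm, hprod]
    ring
  · intro f hf
    have : ¬ Function.Injective f := fun hinj => hf (exists_strictAnti_comp_perm_s6 hinj)
    simp only [Function.Injective, not_forall] at this
    obtain ⟨i, j, hij, hne⟩ := this
    rw [Matrix.det_zero_of_column_eq hne fun l => by simp [hij], zero_mul]

/-- Doubling identifies strictly decreasing tuples with those having only even values. -/
def strictAntiDoubleEquiv (n : ℕ) : {k : Fin n → ℕ // StrictAnti k} ≃
    {k : Fin n → ℕ // StrictAnti k ∧ ∀ l : Fin n, Even (k l)} where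
  toFun k := ⟨fun l => 2 * k.1 l, fun i j hij => by have := k.2 hij; dsimp only; omega,
    fun l => even_two_mul _⟩
  invFun k := ⟨fun l => k.1 l / 2, fun i j hij => by
    have := k.2.1 hij
    obtain ⟨p, hp⟩ := k.2.2 i
    obtain ⟨q, hq⟩ := k.2.2 j
    dsimp only
    omega⟩
  left_inv k := by ext; simp
  right_inv k := by
    ext l
    exact Nat.two_mul_div_two_of_even (k.2.2 l)

theorem cauchy_type_identity_even
    (n : ℕ) (hn : 1 ≤ n) (a x : Fin n → ℝ)
    (hax : ∀ i j : Fin n, |a j * x i| < 1) :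
    HasSum
      (fun k : {k : Fin n → ℕ // StrictAnti k ∧ ∀ l : Fin n, Even (k l)} =>
        (Matrix.of fun i j : Fin n => (a i) ^ (k.1 j)).det *
          (Matrix.of fun i j : Fin n => (x i) ^ (k.1 j)).det)
      ((∏ i : Fin n, ∏ j ∈ Finset.Ioi i, (a j - a i)) *
        (∏ i : Fin n, ∏ j ∈ Finset.Ioi i, (x j - x i)) *
        (∏ i : Fin n, ∏ j ∈ Finset.Ioi i, (a i + a j)) *
        (∏ i : Fin n, ∏ j ∈ Finset.Ioi i, (x i + x j)) *
        ∏ i : Fin n, ∏ j : Fin n, (1 - (a i) ^ 2 * (x j) ^ 2)⁻¹) := by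
  have hlt : ∀ i j, ‖a i ^ 2 * x j ^ 2‖ < 1 := fun i j => by
    rw [← mul_pow, norm_pow]
    exact pow_lt_one₀ (norm_nonneg _) (hax j i) two_ne_zero
  have hpow : ∀ i j m, a i ^ (2 * m) * x j ^ (2 * m) = (a i ^ 2 * x j ^ 2) ^ m := fun i j m => by
    rw [pow_mul, pow_mul, mul_pow]
  have hsum := hasSum_det_mul_det (fun i m => a i ^ (2 * m)) (fun i m => x i ^ (2 * m))
    fun i j => by simpa only [hpow] using summable_norm_geometric_of_norm_lt_one (hlt i j)
  simp only [hpow, fun i j => tsum_geometric_of_norm_lt_one (hlt i j)] at hsum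
  rw [det_one_sub_mul_inv (fun i => a i ^ 2) (fun j => x j ^ 2) fun i j =>
    sub_ne_zero.2 fun h => by simpa [← h] using hlt i j] at hsum
  have hsq : ∀ y : Fin n → ℝ, ∏ i, ∏ j ∈ Ioi i, (y j ^ 2 - y i ^ 2) =
      (∏ i, ∏ j ∈ Ioi i, (y j - y i)) * ∏ i, ∏ j ∈ Ioi i, (y i + y j) := fun y => by
    simp only [← prod_mul_distrib]
    exact prod_congr rfl fun i _ => prod_congr rfl fun j _ => by ring
  rw [hsq, hsq, mul_mul_mul_comm, ← mul_assoc] at hsum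
  rw [← (strictAntiDoubleEquiv n).hasSum_iff]
  exact hsum
end
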